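/- Discontinuity example: Let ε be a rational with 0 < ε ≤ 0.1 and let K' = {(B|A)[0.4, 0.5−ε], (C|A)[0.5, 0.6], (B|C)[1,1], (C|B)[1,1]}, where A, B, C are distinct concept names. Then K' is consistent (the interpretation mapping A, B, C to the empty set over any non-empty finite domain is a model), and every model I of K' satisfies A^I = ∅, i.e., [A]^I = 0; consequently every model of K' satisfies (A|⊤)[0,0]. -/

import Mathlib

open scoped Classical

/-- ALC concepts over concept names and role names (both drawn from ℕ,
regarded as disjoint name spaces). -/
inductive Cpt : Type where
  | top : Cpt
  | atom : ℕ → Cpt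
  | neg : Cpt → Cpt
  | inter : Cpt → Cpt → Cpt
  | ex : ℕ → Cpt → Cpt
deriving DecidableEq

/-- A finite interpretation with domain drawn from the type `α`. -/
structure Interp (α : Type) where
  dom : Finset α
  dom_nonempty : dom.Nonempty
  conc : ℕ → Finset α
  conc_sub : ∀ a, conc a ⊆ dom
  role : ℕ → Finset (α × α)
  role_sub : ∀ r, role r ⊆ dom ×ˢ dom

/-- The extension `C^I` of a concept. -/
noncomputable def Interp.ext {α : Type} (I : Interp α) : Cpt → Finset α
  | .top => I.dom
  | .atom a => I.conc a
  | .neg c => I.dom \ I.ext c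
  | .inter c d => I.ext c ∩ I.ext d
  | .ex r c => I.dom.filter (fun d => ∃ e ∈ I.ext c, (d, e) ∈ I.role r)

/-- `[C]^I`, the cardinality of the extension of `C`. -/
noncomputable def cardC {α : Type} (I : Interp α) (c : Cpt) : ℕ := (I.ext c).card

/-- A probabilistic conditional `(C|D)[l,u]`. -/
structure Cond : Type where
  C : Cpt
  D : Cpt
  l : ℚ
  u : ℚ
deriving DecidableEq

/-- `I ⊨ (C|D)[l,u]` iff `[D]^I = 0` or `l ≤ [C ⊓ D]^I/[D]^I ≤ u`. -/
def satCond {α : Type} (I : Interp α) (κ : Cond) : Prop :=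
  cardC I κ.D = 0 ∨
    (κ.l ≤ (cardC I (.inter κ.C κ.D) : ℚ) / (cardC I κ.D : ℚ) ∧
     (cardC I (.inter κ.C κ.D) : ℚ) / (cardC I κ.D : ℚ) ≤ κ.u)

/-- Finite interpretations (with domain drawn from the countable set ℕ). -/
abbrev FInterp := Interp ℕ

/-- The models of a knowledge base (finite set of conditionals). -/
def Models (K : Finset Cond) : Set FInterp := {I | ∀ κ ∈ K, satCond I κ}

/-- l-entailment: every model of `K` satisfies the conditional. -/
def entailsL (K : Finset Cond) (κ : Cond) : Prop := ∀ I ∈ Models K, satCond I κ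

/-- `I` is a model of `K' = {(B|A)[0.4, 0.5−ε], (C|A)[0.5, 0.6], (B|C)[1,1], (C|B)[1,1]}`. -/
def modelK' (a b c : ℕ) (ε : ℚ) (I : FInterp) : Prop :=
  satCond I ⟨.atom b, .atom a, 4/10, 1/2 - ε⟩ ∧
  satCond I ⟨.atom c, .atom a, 1/2, 6/10⟩ ∧
  satCond I ⟨.atom b, .atom c, 1, 1⟩ ∧
  satCond I ⟨.atom c, .atom b, 1, 1⟩

/-!
In a model of `K'` the conditional `(B|C)[1,1]` forces `C^I ⊆ B^I`, so if `A^I` is non-empty then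
`0.5 ≤ [C ⊓ A]^I/[A]^I ≤ [B ⊓ A]^I/[A]^I ≤ 0.5 - ε`, which is absurd.
-/

section Conditionals

variable {α : Type} {I : Interp α} {A B C D : Cpt} {l u l' u' : ℚ}

theorem cardC_eq_zero : cardC I C = 0 ↔ I.ext C = ∅ :=
  Finset.card_eq_zero

theorem cardC_inter_le_of_ext_subset (h : I.ext C ⊆ I.ext B) :
    cardC I (.inter C D) ≤ cardC I (.inter B D) :=
  Finset.card_le_card (Finset.inter_subset_inter_right h)

theorem satCond_of_ext_eq_empty_right (h : I.ext D = ∅) : satCond I ⟨C, D, l, u⟩ :=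
  Or.inl (cardC_eq_zero.mpr h)

theorem satCond_of_ext_eq_empty_left (h : I.ext C = ∅) (hl : l ≤ 0) (hu : 0 ≤ u) :
    satCond I ⟨C, D, l, u⟩ := by
  have hCD : cardC I (.inter C D) = 0 := by
    rw [cardC_eq_zero, Interp.ext, h, Finset.empty_inter]
  right
  simpa only [hCD, Nat.cast_zero, zero_div] using And.intro hl hu

theorem ext_subset_of_satCond_one (h : satCond I ⟨C, D, 1, u⟩) : I.ext D ⊆ I.ext C := by
  rcases (I.ext D).eq_empty_or_nonempty with hD | hD
  · exact hD ▸ Finset.empty_subset _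
  have hpos : (0 : ℚ) < cardC I D := Nat.cast_pos.mpr hD.card_pos
  have hratio : (1 : ℚ) ≤ cardC I (.inter C D) / cardC I D :=
    (h.resolve_left hD.card_pos.ne').1
  have hcard : cardC I D ≤ cardC I (.inter C D) := by
    exact_mod_cast (one_le_div hpos).mp hratio
  exact Finset.inter_eq_right.mp (Finset.eq_of_subset_of_card_le Finset.inter_subset_right hcard)

theorem ext_eq_empty_of_satCond_of_lt (hB : satCond I ⟨B, A, l, u⟩)
    (hC : satCond I ⟨C, A, l', u'⟩) (hCB : I.ext C ⊆ I.ext B) (hlt : u < l') :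
    I.ext A = ∅ := by
  by_contra hA
  have hcard : cardC I A ≠ 0 := mt cardC_eq_zero.mp hA
  refine hlt.not_ge ?_
  calc
    l' ≤ (cardC I (.inter C A) : ℚ) / cardC I A := (hC.resolve_left hcard).1
    _ ≤ (cardC I (.inter B A) : ℚ) / cardC I A := by
      gcongr
      exact cardC_inter_le_of_ext_subset hCB
    _ ≤ u := (hB.resolve_left hcard).2

end Conditionals

/-- The interpretation with domain `{x}` in which every concept name and every role name is empty;
it witnesses consistency. -/
def Interp.emptyOn {α : Type} (x : α) : Interp α where
  dom := {x}
  dom_nonempty := Finset.singleton_nonempty x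
  conc _ := ∅
  conc_sub _ := Finset.empty_subset _
  role _ := ∅
  role_sub _ := Finset.empty_subset _

/-- `I` is a model of `{(B|A)[l, u], (C|A)[l', u'], (B|C)[1,1], (C|B)[1,1]}`: the knowledge base
`K'` with arbitrary bounds on its first two conditionals, and `I` over an arbitrary domain type. -/
def modelBounds {α : Type} (a b c : ℕ) (l u l' u' : ℚ) (I : Interp α) : Prop :=
  satCond I ⟨.atom b, .atom a, l, u⟩ ∧
  satCond I ⟨.atom c, .atom a, l', u'⟩ ∧
  satCond I ⟨.atom b, .atom c, 1, 1⟩ ∧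
  satCond I ⟨.atom c, .atom b, 1, 1⟩

section ModelBounds

variable {α : Type} {a b c : ℕ} {l u l' u' : ℚ} {I : Interp α}

theorem modelBounds_of_conc_eq_empty (ha : I.conc a = ∅) (hb : I.conc b = ∅)
    (hc : I.conc c = ∅) : modelBounds a b c l u l' u' I :=
  ⟨satCond_of_ext_eq_empty_right ha, satCond_of_ext_eq_empty_right ha,
    satCond_of_ext_eq_empty_right hc, satCond_of_ext_eq_empty_right hb⟩

theorem modelBounds.ext_eq_empty (h : modelBounds a b c l u l' u' I) (hlt : u < l') :
    I.ext (.atom a) = ∅ := by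
  obtain ⟨hB, hC, hBC, -⟩ := h
  exact ext_eq_empty_of_satCond_of_lt hB hC (ext_subset_of_satCond_one hBC) hlt

end ModelBounds

theorem discontinuity_example_general {α : Type} [Nonempty α] (a b c : ℕ) {l u l' u' : ℚ}
    (hlt : u < l') :
    (∀ I : Interp α, I.conc a = ∅ → I.conc b = ∅ → I.conc c = ∅ →
      modelBounds a b c l u l' u' I) ∧
    (∃ I : Interp α, modelBounds a b c l u l' u' I) ∧
    (∀ I : Interp α, modelBounds a b c l u l' u' I →
      I.ext (.atom a) = ∅ ∧ cardC I (.atom a) = 0 ∧ satCond I ⟨.atom a, .top, 0, 0⟩) := by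
  obtain ⟨x⟩ := ‹Nonempty α›
  refine ⟨fun _ ↦ modelBounds_of_conc_eq_empty,
    ⟨.emptyOn x, modelBounds_of_conc_eq_empty rfl rfl rfl⟩, fun I hI ↦ ?_⟩
  have hA : I.ext (.atom a) = ∅ := hI.ext_eq_empty hlt
  exact ⟨hA, cardC_eq_zero.mpr hA, satCond_of_ext_eq_empty_left hA le_rfl le_rfl⟩

/-- Discontinuity example: for `0 < ε ≤ 0.1`, the KB `K'` is consistent
(any interpretation mapping `A`, `B`, `C` to `∅` is a model), and every model `I` of
`K'` satisfies `A^I = ∅`, hence satisfies `(A|⊤)[0,0]`. -/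
theorem discontinuity_example (a b c : ℕ) (hab : a ≠ b) (hac : a ≠ c) (hbc : b ≠ c)
    (ε : ℚ) (hε : 0 < ε) (hε1 : ε ≤ 1/10) :
    (∀ I : FInterp, I.conc a = ∅ → I.conc b = ∅ → I.conc c = ∅ → modelK' a b c ε I) ∧
    (∃ I : FInterp, modelK' a b c ε I) ∧
    (∀ I : FInterp, modelK' a b c ε I →
      I.ext (.atom a) = ∅ ∧ cardC I (.atom a) = 0 ∧ satCond I ⟨.atom a, .top, 0, 0⟩) :=
  discontinuity_example_general a b c (sub_lt_self _ hε)
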